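/- arXiv:2011.10685 — 4 statements merged into one kernel-verified Lean document; each statement's English description precedes it below -/
import Mathlib

section
/- Consider the 2-step fixed-stepsize LIMM method of order two with coefficients α_{-1} = 1, α_0 = −4/3, α_1 = 1/3, β_0 = 2/3, β_1 = 0, μ_{-1} = 2/3, μ_0 = −2/3, μ_1 = 0 and ν_i = 0, whose stability polynomial is (1 − (2/3)z)ζ² − (4/3)ζ + 1/3. Then for every z ∈ ℂ with Re z ≤ 0 and every ζ ∈ ℂ with (1 − (2/3)z)ζ² − (4/3)ζ + 1/3 = 0, one has |ζ| ≤ 1; that is, the method is A-stable. -/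
/-- A-stability of the 2-step fixed-stepsize LIMM method of order two
(coefficients `α₋₁ = 1`, `α₀ = -4/3`, `α₁ = 1/3`, `β₀ = 2/3`, `β₁ = 0`,
`μ₋₁ = 2/3`, `μ₀ = -2/3`, `μ₁ = 0`, `νᵢ = 0`): for every `z` with `Re z ≤ 0`,
all roots of the stability polynomial `(1 - (2/3) z) ζ² - (4/3) ζ + 1/3`
have modulus at most one. -/
theorem limm2_A_stable :
    ∀ z : ℂ, z.re ≤ 0 → ∀ ζ : ℂ,
      (1 - (2 / 3 : ℂ) * z) * ζ ^ 2 - (4 / 3 : ℂ) * ζ + 1 / 3 = 0 → ‖ζ‖ ≤ 1 := by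
  intro z hz ζ h
  by_contra! hn
  have h0 : ζ ≠ 0 := by
    rintro rfl
    simp at hn
    linarith
  obtain ⟨w, hw⟩ : ∃ w, w = ζ⁻¹ := ⟨_, rfl⟩
  have hw1 : ‖w‖ < 1 := by
    rw [hw, norm_inv]
    exact inv_lt_one_of_one_lt₀ hn
  have hm : ζ * w = 1 := by rw [hw]; exact mul_inv_cancel₀ h0
  have e : 2 * z = 3 - 4 * w + w * w := by
    linear_combination (-3 * w ^ 2) * h + ((3 - 2 * z) * (ζ * w + 1) - 4 * w) * hm
  have hr := congrArg Complex.re e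
  simp at hr
  have h2 : w.re * w.re + w.im * w.im < 1 := by
    rw [← Complex.normSq_apply, Complex.normSq_eq_norm_sq]
    nlinarith [norm_nonneg w]
  nlinarith [sq_nonneg (1 - w.re)]
end

section
/- Consider the 2-step LIMM method with stability polynomial (1 − (2/3)z)ζ² − (4/3)ζ + 1/3. Then its roots tend to 0 as z → −∞ along the real axis: for every ε > 0 there exists M > 0 such that for every real z < −M, every ζ ∈ ℂ with (1 − (2/3)z)ζ² − (4/3)ζ + 1/3 = 0 satisfies |ζ| < ε. -/
/-- L-stability-type root decay for the 2-step fixed-stepsize LIMM method of order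
two: all roots of the stability polynomial `(1 - (2/3) z) ζ² - (4/3) ζ + 1/3` tend
to `0` as `z → -∞` along the real axis. -/
theorem limm2_roots_tendsto_zero :
    ∀ ε : ℝ, 0 < ε → ∃ M : ℝ, 0 < M ∧ ∀ z : ℝ, z < -M → ∀ ζ : ℂ,
      (1 - (2 / 3 : ℂ) * (z : ℂ)) * ζ ^ 2 - (4 / 3 : ℂ) * ζ + 1 / 3 = 0 → ‖ζ‖ < ε := by
  intro ε hε
  refine ⟨2 * ε⁻¹ + (ε⁻¹) ^ 2, by positivity, ?_⟩
  intro z hz ζ h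
  by_contra! hr
  have ht : 0 < ε⁻¹ := inv_pos.mpr hε
  have h1 : 1 ≤ ‖ζ‖ * ε⁻¹ := by
    rw [← mul_inv_cancel₀ hε.ne']
    exact mul_le_mul_of_nonneg_right hr ht.le
  generalize ε⁻¹ = t at *
  have ha : 0 < 1 - (2 / 3) * z := by nlinarith [sq_nonneg t]
  have e : ((1 - (2 / 3) * z : ℝ) : ℂ) * ζ ^ 2 = ((4 / 3 : ℝ) : ℂ) * ζ - ((1 / 3 : ℝ) : ℂ) := by
    push_cast
    linear_combination h
  have hn : (1 - (2 / 3) * z) * ‖ζ‖ ^ 2 ≤ 4 / 3 * ‖ζ‖ + 1 / 3 := by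
    have h2 := norm_sub_le (((4 / 3 : ℝ) : ℂ) * ζ) ((1 / 3 : ℝ) : ℂ)
    rw [← e, norm_mul, norm_mul, norm_pow, Complex.norm_real, Complex.norm_real,
      Complex.norm_real, Real.norm_of_nonneg ha.le, Real.norm_of_nonneg (by norm_num),
      Real.norm_of_nonneg (by norm_num)] at h2
    exact h2
  have hp : 0 < ‖ζ‖ := lt_of_lt_of_le hε hr
  generalize ‖ζ‖ = r at *
  have h3 : r ≤ r * (r * t) := le_mul_of_one_le_right hp.le h1
  have h4 : 1 ≤ (r * t) ^ 2 := one_le_pow₀ h1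
  have h5 : (2 / 3 * (2 * t + t ^ 2)) * r ^ 2 ≤ (1 - (2 / 3) * z) * r ^ 2 :=
    mul_le_mul_of_nonneg_right (by linarith) (by positivity)
  nlinarith
end

section
/- Consider the 2-step fixed-stepsize LIMM-W method of order two with α_{-1} = 1, α_0 = −146619050/133414177, α_1 = 13204873/133414177, μ_{-1} = 73309525/133414177, β_0 + μ_0 = 46899779/133414177, β_1 + μ_1 = 0 and ν_i = 0, whose stability polynomial is (1 − (73309525/133414177) z) ζ² + (−146619050/133414177 − (46899779/133414177) z) ζ + 13204873/133414177. Then for every z ∈ ℂ with Re z ≤ 0, every root ζ of this polynomial satisfies |ζ| ≤ 1; that is, the method is A-stable. -/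
/-- Positivity of the real part of `ρ conj σ` (in `w = 1/ζ`) inside the unit disc. -/
theorem limmw2_pos (x y : ℝ) (h : x ^ 2 + y ^ 2 < 1) :
    0 < (133414177 - 146619050 * x + 13204873 * (x ^ 2 - y ^ 2)) * (73309525 + 46899779 * x)
      + (-146619050 * y + 13204873 * (2 * x * y)) * (46899779 * y) := by
  have hy := sq_nonneg y
  have h1 : x < 1 := by nlinarith
  have h2 : -1 < x := by nlinarith
  have hA : 0 < (1 - x) * (133414177 - 13204873 * x) * (73309525 + 46899779 * x) :=
    mul_pos (mul_pos (by linarith) (by linarith)) (by linarith)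
  have hB : 0 < 13204873 * 146619050 * (1 - x) ^ 2 := by
    have : 0 < 1 - x := by linarith
    positivity
  have hd : 0 < 1 - x ^ 2 := by nlinarith
  have e1 := mul_pos (sub_pos.2 h) hA
  have e2 := mul_nonneg hy hB.le
  refine pos_of_mul_pos_right (a := 1 - x ^ 2) ?_ hd.le
  nlinarith [e1, e2]

/-- A-stability of the 2-step fixed-stepsize LIMM-W method of order two: for every
`z` with `Re z ≤ 0`, all roots of the stability polynomial
`(1 - (73309525/133414177) z) ζ² + (-146619050/133414177 - (46899779/133414177) z) ζ
  + 13204873/133414177` have modulus at most one. -/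
theorem limmw2_A_stable :
    ∀ z : ℂ, z.re ≤ 0 → ∀ ζ : ℂ,
      (1 - (73309525 / 133414177 : ℂ) * z) * ζ ^ 2
        + (-(146619050 / 133414177 : ℂ) - (46899779 / 133414177 : ℂ) * z) * ζ
        + 13204873 / 133414177 = 0 → ‖ζ‖ ≤ 1 := by
  intro z hz ζ h
  by_contra! hn
  have h0 : ζ ≠ 0 := by
    rintro rfl
    norm_num at hn
  obtain ⟨w, hw⟩ : ∃ w, w = ζ⁻¹ := ⟨_, rfl⟩
  have hwn : ‖w‖ < 1 := by
    rw [hw, norm_inv]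
    exact inv_lt_one_of_one_lt₀ hn
  have hzw : ζ * w = 1 := by rw [hw]; exact mul_inv_cancel₀ h0
  have key : 133414177 - 146619050 * w + 13204873 * w ^ 2
      = z * (73309525 + 46899779 * w) := by
    linear_combination 133414177 * w ^ 2 * h
      - ((133414177 - 73309525 * z) * (ζ * w + 1) + (-146619050 - 46899779 * z) * w) * hzw
  have hsq : w.re ^ 2 + w.im ^ 2 < 1 := by
    have h1 : ‖w‖ ^ 2 < 1 := by nlinarith [norm_nonneg w]
    rw [Complex.sq_norm, Complex.normSq_apply] at h1
    linarith
  have hp := limmw2_pos w.re w.im hsq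
  have hre := congrArg Complex.re key
  have him := congrArg Complex.im key
  simp [pow_two] at hre him
  have e : (133414177 - 146619050 * w.re + 13204873 * (w.re ^ 2 - w.im ^ 2))
        * (73309525 + 46899779 * w.re)
      + (-146619050 * w.im + 13204873 * (2 * w.re * w.im)) * (46899779 * w.im)
      = z.re * ((73309525 + 46899779 * w.re) ^ 2 + (46899779 * w.im) ^ 2) := by
    linear_combination (73309525 + 46899779 * w.re) * hre + (46899779 * w.im) * him
  rw [e] at hp
  have : z.re * ((73309525 + 46899779 * w.re) ^ 2 + (46899779 * w.im) ^ 2) ≤ 0 :=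
    mul_nonpos_of_nonpos_of_nonneg hz (by positivity)
  linarith
end

section
/- The first characteristic polynomial of the 3-step fixed-stepsize LIMM-W method of order three, ϱ(ζ) = ζ³ − (192592391/118869921) ζ² + (41981416/61945353) ζ − 5229175002546/90906657005273, is zero-stable: every complex root of ϱ has modulus at most 1, and every root of modulus exactly 1 is a simple root (in fact ζ = 1 is the unique root on the unit circle and it is simple). -/
open Polynomial

/-- Zero-stability of the 3-step fixed-stepsize LIMM-W method of order three:
every root of the first characteristic polynomial
`ϱ(ζ) = ζ³ - (192592391/118869921) ζ² + (41981416/61945353) ζ - 5229175002546/90906657005273`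
lies in the closed unit disc, the only root on the unit circle is `ζ = 1`,
and it is a simple root. -/
theorem limmw3_zero_stable :
    let P : Polynomial ℂ :=
      X ^ 3 - C (192592391 / 118869921 : ℂ) * X ^ 2
        + C (41981416 / 61945353 : ℂ) * X - C (5229175002546 / 90906657005273 : ℂ)
    (∀ ζ : ℂ, P.IsRoot ζ → ‖ζ‖ ≤ 1) ∧
    (∀ ζ : ℂ, P.IsRoot ζ → ‖ζ‖ = 1 → ζ = 1) ∧
    P.IsRoot 1 ∧ P.rootMultiplicity 1 = 1 := by
  intro P
  let Q : Polynomial ℂ :=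
    X ^ 2 - C (73722470 / 118869921 : ℂ) * X + C (5229175002546 / 90906657005273 : ℂ)
  have hP : P = (X - C 1) * Q := by
    have h1 : (C (192592391 / 118869921 : ℂ)) = C (73722470 / 118869921 : ℂ) + C 1 := by
      rw [← C_add]; norm_num
    have h2 : (C (41981416 / 61945353 : ℂ))
        = C (73722470 / 118869921 : ℂ) + C (5229175002546 / 90906657005273 : ℂ) := by
      rw [← C_add]; norm_num
    simp only [P, Q]
    rw [h1, h2, C_1]
    ring
  have hQ : ∀ ζ : ℂ, Q.IsRoot ζ → ‖ζ‖ < 1 := by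
    intro ζ h
    simp only [Q, IsRoot.def, eval_add, eval_sub, eval_mul, eval_pow, eval_X, eval_C] at h
    by_contra! hz
    have h3 : ζ ^ 2 = (73722470 / 118869921 : ℂ) * ζ - (5229175002546 / 90906657005273 : ℂ) := by
      linear_combination h
    have h4 : ‖ζ‖ ^ 2 ≤ (73722470 / 118869921 : ℝ) * ‖ζ‖ + 5229175002546 / 90906657005273 := by
      calc ‖ζ‖ ^ 2 = ‖ζ ^ 2‖ := (norm_pow _ _).symm
        _ ≤ _ := by
          rw [h3]
          refine (norm_sub_le _ _).trans (le_of_eq ?_)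
          simp
    nlinarith
  have hroot : ∀ ζ : ℂ, P.IsRoot ζ → ζ = 1 ∨ ‖ζ‖ < 1 := by
    intro ζ h
    rw [hP, root_mul] at h
    rcases h with h | h
    · left
      exact (root_X_sub_C.mp h).symm
    · exact Or.inr (hQ ζ h)
  have hQ1 : ¬ Q.IsRoot 1 := fun h => by simpa using hQ 1 h
  have hQ0 : Q ≠ 0 := by
    intro h
    exact hQ1 (by simp [h])
  refine ⟨?_, ?_, ?_, ?_⟩
  · intro ζ h
    rcases hroot ζ h with h | h
    · simp [h]
    · exact h.le
  · intro ζ h hn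
    rcases hroot ζ h with h | h
    · exact h
    · exact absurd hn h.ne
  · rw [hP, root_mul]
    left
    simp
  · rw [hP, rootMultiplicity_mul (mul_ne_zero (X_sub_C_ne_zero 1) hQ0),
      rootMultiplicity_X_sub_C_self, rootMultiplicity_eq_zero hQ1]
end
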